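/- For every ν ≥ 0, ξ > 0 and k ∈ ℕ, the k-th eigenvalue λ_{ξ,k} of the Friedrichs extension G_ξ of -∂ₓ² + ξ²x² + (ν²-1/4)/x² on (0,1) satisfies λ_{ξ,k}/ξ > 4k + 2(1+ν). -/

import Mathlib

open MeasureTheory Set Filter

/-- `E` is an eigenvalue of the Friedrichs extension `G_ξ` of
`-∂ₓ² + ξ²x² + (ν²-1/4)/x²` on `(0,1)`: there is a nonzero solution of the eigenvalue
ODE on `(0,1)` vanishing at both endpoints and with finite energy form
`∫₀¹ f'² + (ξ²x² + (ν²-1/4)/x²) f²`. -/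
def IsEigenvalueGxi (ν ξ E : ℝ) : Prop :=
  ∃ f : ℝ → ℝ, (∃ x ∈ Ioo (0:ℝ) 1, f x ≠ 0) ∧
    (∀ x ∈ Ioo (0:ℝ) 1, DifferentiableAt ℝ f x) ∧
    (∀ x ∈ Ioo (0:ℝ) 1, DifferentiableAt ℝ (deriv f) x) ∧
    (∀ x ∈ Ioo (0:ℝ) 1,
      -(deriv (deriv f) x) + ξ ^ 2 * x ^ 2 * f x + (ν ^ 2 - 1/4) / x ^ 2 * f x = E * f x) ∧
    Tendsto f (nhdsWithin 0 (Ioo 0 1)) (nhds 0) ∧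
    Tendsto f (nhdsWithin 1 (Ioo 0 1)) (nhds 0) ∧
    IntegrableOn
      (fun x => (deriv f x) ^ 2 + (ξ ^ 2 * x ^ 2 + (ν ^ 2 - 1/4) / x ^ 2) * (f x) ^ 2)
      (Ioo (0:ℝ) 1)

/-!
Finite energy makes `f f'` bounded, hence `f²` Lipschitz, for an eigenfunction `f` of `G_ξ`, so the
boundary terms in Sturm's comparison theorem vanish even at the singular end `0`. Comparing
successive eigenfunctions, the `k`-th one has at least `k + 2` zeros in `[0, 1]`. If `λ_k` were at
most `ξ (4 k + 2 (1 + ν))`, comparison with the solution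
`x ^ (ν + 1/2) exp(-ξ x² / 2) L_k(ξ x²)` of the equation with that energy, where `L_k` is a Laguerre
polynomial of degree `k`, would produce `k + 1` positive zeros of `L_k`.
-/

open scoped Topology NNReal

section Interlacing

theorem encard_le_encard_add_one_of_interleaved {α : Type*} [LinearOrder α] {s t : Set α}
    (h : ∀ x ∈ s, ∀ y ∈ s, x < y → ∃ z ∈ t, z ∈ Ioc x y) : s.encard ≤ t.encard + 1 := by
  rcases t.finite_or_infinite with ht | ht
  · have hmono : StrictMonoOn (fun x => (t ∩ Iic x).ncard) s := fun x hx y hy hxy => by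
      obtain ⟨z, hzt, hxz, hzy⟩ := h x hx y hy hxy
      refine ncard_lt_ncard ⟨?_, fun hsub => ?_⟩ (ht.inter_of_left _)
      · exact inter_subset_inter_right _ (Iic_subset_Iic.2 hxy.le)
      · exact hxz.not_ge (hsub ⟨hzt, hzy⟩).2
    have hmaps : MapsTo (fun x => (t ∩ Iic x).ncard) s (Iic t.ncard) :=
      fun x _ => ncard_le_ncard inter_subset_left ht
    calc s.encard ≤ (Iic t.ncard).encard := encard_le_encard_of_injOn hmaps hmono.injOn
      _ = t.ncard + 1 := by
        rw [← Finset.coe_Iic, encard_coe_eq_coe_finsetCard, Nat.card_Iic, Nat.cast_add_one]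
      _ = t.encard + 1 := by rw [ht.cast_ncard_eq]
  · simp [ht.encard_eq]

end Interlacing

section Calculus

variable {a b c : ℝ}

theorem tendsto_atBot_of_div_sub_le_deriv {g g' : ℝ → ℝ} (hab : a < b) (hc : 0 < c)
    (hg : ∀ x ∈ Ioo a b, HasDerivAt g (g' x) x) (hg' : ∀ x ∈ Ioo a b, c / (x - a) ≤ g' x) :
    Tendsto g (𝓝[>] a) atBot := by
  have hd : ∀ x ∈ Ioo a b,
      HasDerivAt (fun x => g x - c * Real.log (x - a)) (g' x - c * (1 / (x - a))) x :=
    fun x hx => (hg x hx).sub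
      ((((hasDerivAt_id x).sub_const a).log (sub_pos.2 hx.1).ne').const_mul c)
  have hmono : MonotoneOn (fun x => g x - c * Real.log (x - a)) (Ioo a b) := by
    refine monotoneOn_of_hasDerivWithinAt_nonneg (convex_Ioo a b) (HasDerivAt.continuousOn hd)
      (fun x hx => (hd x (interior_subset hx)).hasDerivWithinAt) fun x hx => ?_
    rw [mul_one_div]
    exact sub_nonneg.2 (hg' x (interior_subset hx))
  obtain ⟨y, hy⟩ := exists_between hab
  have hsub : Tendsto (fun x => x - a) (𝓝[>] a) (𝓝[>] 0) := tendsto_nhdsWithin_iff.2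
    ⟨((continuous_sub_right a).tendsto' a 0 (sub_self a)).mono_left nhdsWithin_le_nhds,
      eventually_mem_nhdsWithin.mono fun _ hx => mem_Ioi.2 (sub_pos.2 hx)⟩
  have hlog : Tendsto (fun x => Real.log (x - a)) (𝓝[>] a) atBot :=
    Real.tendsto_log_nhdsGT_zero.comp hsub
  refine tendsto_atBot_mono' _ ?_
    (tendsto_atBot_add_const_left _ (g y - c * Real.log (y - a)) (hlog.const_mul_atBot hc))
  filter_upwards [Ioo_mem_nhdsGT hy.1] with x hx
  have := hmono ⟨hx.1, hx.2.trans hy.2⟩ hy hx.2.le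
  linarith

theorem exists_norm_le_of_integrableOn_deriv {F : Type*} [NormedAddCommGroup F] [NormedSpace ℝ F]
    [CompleteSpace F] {s : Set ℝ} [hs : OrdConnected s] {g g' : ℝ → F}
    (hg : ∀ x ∈ s, HasDerivAt g (g' x) x) (hint : IntegrableOn g' s) :
    ∃ K, ∀ x ∈ s, ‖g x‖ ≤ K := by
  rcases s.eq_empty_or_nonempty with rfl | ⟨p, hp⟩
  · exact ⟨0, fun x hx => hx.elim⟩
  refine ⟨‖g p‖ + ∫ x in s, ‖g' x‖, fun x hx => ?_⟩
  have hsub : uIcc p x ⊆ s := hs.uIcc_subset hp hx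
  have hftc : ∫ y in p..x, g' y = g x - g p :=
    intervalIntegral.integral_eq_sub_of_hasDerivAt (fun y hy => hg y (hsub hy))
      (hint.mono_set hsub).intervalIntegrable
  calc ‖g x‖ ≤ ‖g p‖ + ‖g x - g p‖ := norm_le_norm_add_norm_sub' _ _
    _ ≤ ‖g p‖ + ∫ x in s, ‖g' x‖ := by
      gcongr
      rw [← hftc]
      exact intervalIntegral.norm_integral_le_integral_norm_uIoc.trans
        (setIntegral_mono_set hint.norm (ae_of_all _ fun _ => norm_nonneg _)
          (uIoc_subset_uIcc.trans hsub).eventuallyLE)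

theorem exists_const_mul_pos {X : Type*} [TopologicalSpace X] {s : Set X} {f : X → ℝ}
    (hs : IsPreconnected s) (hf : ContinuousOn f s)
    (hf0 : ∀ x ∈ s, f x ≠ 0) : ∃ r ≠ 0, ∀ x ∈ s, 0 < r * f x := by
  rcases s.eq_empty_or_nonempty with rfl | ⟨p, hp⟩
  · exact ⟨1, one_ne_zero, fun x hx => hx.elim⟩
  refine ⟨f p, hf0 p hp, fun x hx => ?_⟩
  by_contra! hneg
  obtain ⟨y, hy, hfy⟩ := hs.intermediate_value hx hp (continuousOn_const.mul hf)
    ⟨hneg, mul_self_nonneg (f p)⟩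
  exact (mul_ne_zero (hf0 p hp) (hf0 y hy)) hfy

theorem exists_consecutive_zeros {f : ℝ → ℝ} {x : ℝ} (hf : ContinuousOn f (Icc a b))
    (ha : f a = 0) (hb : f b = 0) (hx : x ∈ Ioo a b) (hfx : f x ≠ 0) :
    ∃ c d, a ≤ c ∧ d ≤ b ∧ x ∈ Ioo c d ∧ f c = 0 ∧ f d = 0 ∧ ∀ y ∈ Ioo c d, f y ≠ 0 := by
  have hcpt : ∀ {p q}, a ≤ p → q ≤ b → IsCompact (Icc p q ∩ f ⁻¹' {0}) := fun hp hq =>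
    isCompact_Icc.of_isClosed_subset ((hf.mono (Icc_subset_Icc hp hq)).preimage_isClosed_of_isClosed
      isClosed_Icc isClosed_singleton) inter_subset_left
  obtain ⟨c, ⟨hc, hfc⟩, hcmax⟩ :=
    (hcpt le_rfl hx.2.le).exists_isGreatest ⟨a, ⟨le_rfl, hx.1.le⟩, ha⟩
  obtain ⟨d, ⟨hd, hfd⟩, hdmin⟩ :=
    (hcpt hx.1.le le_rfl).exists_isLeast ⟨b, ⟨hx.2.le, le_rfl⟩, hb⟩
  have hcx : c < x := hc.2.lt_of_ne fun h => hfx (h ▸ hfc)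
  have hxd : x < d := hd.1.lt_of_ne fun h => hfx (h ▸ hfd)
  refine ⟨c, d, hc.1, hd.2, ⟨hcx, hxd⟩, hfc, hfd, fun y hy hfy => ?_⟩
  rcases le_total y x with h | h
  · exact hy.1.not_ge (hcmax ⟨⟨hc.1.trans hy.1.le, h⟩, hfy⟩)
  · exact hy.2.not_ge (hdmin ⟨⟨h, hy.2.le.trans hd.2⟩, hfy⟩)

end Calculus

/-- `f` solves the Schrödinger equation `-f'' + V f = E f` on `s`. The derivative `f'` is part of
the data, so that both first-order equations can be stated with `HasDerivAt`. -/
structure IsSchrodingerSol (V : ℝ → ℝ) (E : ℝ) (s : Set ℝ) (f f' : ℝ → ℝ) : Prop where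
  hasDerivAt : ∀ x ∈ s, HasDerivAt f (f' x) x
  hasDerivAt_deriv : ∀ x ∈ s, HasDerivAt f' ((V x - E) * f x) x

/-- The Wronskian `f u' - f' u` of two functions given together with their derivatives. -/
def wronskian (f f' u u' : ℝ → ℝ) (x : ℝ) : ℝ := f x * u' x - f' x * u x

namespace IsSchrodingerSol

variable {V : ℝ → ℝ} {E F K a b : ℝ} {s t : Set ℝ} {f f' u u' : ℝ → ℝ}

theorem mono (hf : IsSchrodingerSol V E t f f') (hst : s ⊆ t) : IsSchrodingerSol V E s f f' :=
  ⟨fun x hx => hf.hasDerivAt x (hst hx), fun x hx => hf.hasDerivAt_deriv x (hst hx)⟩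

theorem congr (hf : IsSchrodingerSol V E s f f') (hs : IsOpen s) (hu : EqOn u f s) :
    IsSchrodingerSol V E s u f' where
  hasDerivAt x hx :=
    (hf.hasDerivAt x hx).congr_of_eventuallyEq (hu.eventuallyEq_of_mem (hs.mem_nhds hx))
  hasDerivAt_deriv x hx := hu hx ▸ hf.hasDerivAt_deriv x hx

theorem continuousOn (hf : IsSchrodingerSol V E s f f') : ContinuousOn f s :=
  HasDerivAt.continuousOn hf.hasDerivAt

theorem const_mul (r : ℝ) (hf : IsSchrodingerSol V E s f f') :
    IsSchrodingerSol V E s (fun x => r * f x) (fun x => r * f' x) where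
  hasDerivAt x hx := (hf.hasDerivAt x hx).const_mul r
  hasDerivAt_deriv x hx := ((hf.hasDerivAt_deriv x hx).const_mul r).congr_deriv (by ring)

theorem comp_neg (hf : IsSchrodingerSol V E s f f') (ht : MapsTo Neg.neg t s) :
    IsSchrodingerSol (fun x => V (-x)) E t (fun x => f (-x)) (fun x => -f' (-x)) where
  hasDerivAt x hx :=
    ((hf.hasDerivAt (-x) (ht hx)).comp x (hasDerivAt_neg x)).congr_deriv (mul_neg_one _)
  hasDerivAt_deriv x hx :=
    ((hf.hasDerivAt_deriv (-x) (ht hx)).comp x (hasDerivAt_neg x)).neg.congr_deriv (by ring)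

/-! ### Unique continuation -/

theorem eqOn_zero_of_initial (hf : IsSchrodingerSol V E (Ioo a b) f f')
    (hV : ContinuousOn V (Ioo a b)) {p : ℝ} (hp : p ∈ Ioo a b) (h0 : f p = 0) (h0' : f' p = 0) :
    EqOn f 0 (Ioo a b) := by
  intro x hx
  obtain ⟨c, hac, hc⟩ := exists_between (lt_min hp.1 hx.1)
  obtain ⟨d, hd, hdb⟩ := exists_between (max_lt hp.2 hx.2)
  have hsub : Icc c d ⊆ Ioo a b := Icc_subset_Ioo hac hdb
  obtain ⟨K, hK⟩ := isCompact_Icc.exists_bound_of_continuousOn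
    ((hV.sub continuousOn_const).mono hsub : ContinuousOn (fun y => V y - E) (Icc c d))
  -- The equation as a linear first-order system for the pair `(f, f')`.
  let v : ℝ → ℝ × ℝ → ℝ × ℝ := fun y w => (w.2, (V y - E) * w.1)
  have hv : ∀ y ∈ Ioo c d, LipschitzOnWith (max 1 K.toNNReal) (v y) univ := fun y hy => by
    have hle : ‖V y - E‖₊ ≤ K.toNNReal := by
      rw [← NNReal.coe_le_coe, coe_nnnorm]
      exact (hK y (Ioo_subset_Icc_self hy)).trans (Real.le_coe_toNNReal K)
    have hmul : LipschitzWith K.toNNReal fun w : ℝ × ℝ => (V y - E) * w.1 :=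
      ((lipschitzWith_smul (V y - E)).comp LipschitzWith.prod_fst).weaken
        (by rwa [mul_one])
    exact (LipschitzWith.prod_snd.prodMk hmul).lipschitzOnWith
  have hpair : ∀ y ∈ Icc c d, HasDerivAt (fun y => (f y, f' y)) (v y (f y, f' y)) y :=
    fun y hy => (hf.hasDerivAt y (hsub hy)).prodMk (hf.hasDerivAt_deriv y (hsub hy))
  have hzero : ∀ y ∈ Icc c d, HasDerivAt (fun _ => (0 : ℝ × ℝ)) (v y 0) y :=
    fun y _ => (hasDerivAt_const y 0).congr_deriv (Prod.ext rfl (mul_zero _).symm)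
  have heq := ODE_solution_unique_of_mem_Ioo hv (t₀ := p)
    ⟨hc.trans_le (min_le_left _ _), (le_max_left _ _).trans_lt hd⟩
    (fun y hy => ⟨hpair y (Ioo_subset_Icc_self hy), mem_univ _⟩)
    (fun y hy => ⟨hzero y (Ioo_subset_Icc_self hy), mem_univ _⟩) (Prod.ext h0 h0')
  exact congrArg Prod.fst
    (heq ⟨hc.trans_le (min_le_right _ _), (le_max_right _ _).trans_lt hd⟩)

theorem exists_ne_zero_of_subinterval (hf : IsSchrodingerSol V E (Ioo a b) f f')
    (hV : ContinuousOn V (Ioo a b)) (hne : ∃ x ∈ Ioo a b, f x ≠ 0) {c d : ℝ} (hcd : c < d)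
    (hsub : Ioo c d ⊆ Ioo a b) : ∃ x ∈ Ioo c d, f x ≠ 0 := by
  by_contra! hzero
  obtain ⟨p, hp⟩ := exists_between hcd
  have hderiv : HasDerivAt f 0 p := (hasDerivAt_const p 0).congr_of_eventuallyEq
    (EqOn.eventuallyEq_of_mem hzero (isOpen_Ioo.mem_nhds hp))
  obtain ⟨x, hx, hfx⟩ := hne
  exact hfx (hf.eqOn_zero_of_initial hV (hsub hp) (hzero p hp)
    ((hf.hasDerivAt p (hsub hp)).unique hderiv) hx)

/-! ### Sturm comparison -/

theorem hasDerivAt_wronskian (hf : IsSchrodingerSol V E s f f') (hu : IsSchrodingerSol V F s u u')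
    {x : ℝ} (hx : x ∈ s) : HasDerivAt (wronskian f f' u u') ((E - F) * (f x * u x)) x :=
  (((hf.hasDerivAt x hx).mul (hu.hasDerivAt_deriv x hx)).sub
    ((hf.hasDerivAt_deriv x hx).mul (hu.hasDerivAt x hx))).congr_deriv (by ring)

theorem hasDerivAt_div (hf : IsSchrodingerSol V E s f f') (hu : IsSchrodingerSol V F s u u')
    {x : ℝ} (hx : x ∈ s) (hfx : f x ≠ 0) :
    HasDerivAt (fun x => u x / f x) (wronskian f f' u u' x / f x ^ 2) x :=
  ((hu.hasDerivAt x hx).div (hf.hasDerivAt x hx) hfx).congr_deriv (by rw [wronskian]; ring)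

theorem antitoneOn_wronskian (hf : IsSchrodingerSol V E (Ioo a b) f f')
    (hu : IsSchrodingerSol V F (Ioo a b) u u') (hEF : E ≤ F) (hfpos : ∀ x ∈ Ioo a b, 0 < f x)
    (hupos : ∀ x ∈ Ioo a b, 0 < u x) : AntitoneOn (wronskian f f' u u') (Ioo a b) :=
  antitoneOn_of_hasDerivWithinAt_nonpos (convex_Ioo a b)
    (HasDerivAt.continuousOn fun _ hx => hf.hasDerivAt_wronskian hu hx)
    (fun _ hx => (hf.hasDerivAt_wronskian hu (interior_subset hx)).hasDerivWithinAt)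
    fun x hx => mul_nonpos_of_nonpos_of_nonneg (sub_nonpos.2 hEF)
      (mul_pos (hfpos x (interior_subset hx)) (hupos x (interior_subset hx))).le

/-- If the Wronskian `W` were at least `c > 0` near `a`, then `(u / f)' = W / f² ≥ c / (K (x - a))`,
and `u / f > 0` would tend to `-∞` at `a`. -/
theorem wronskian_nonpos (hf : IsSchrodingerSol V E (Ioo a b) f f')
    (hu : IsSchrodingerSol V F (Ioo a b) u u') (hEF : E ≤ F) (hfpos : ∀ x ∈ Ioo a b, 0 < f x)
    (hupos : ∀ x ∈ Ioo a b, 0 < u x) (hfa : ∀ x ∈ Ioo a b, f x ^ 2 ≤ K * (x - a)) :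
    ∀ x ∈ Ioo a b, wronskian f f' u u' x ≤ 0 := by
  intro y hy
  by_contra! hWy
  have hsub : Ioo a y ⊆ Ioo a b := Ioo_subset_Ioo_right hy.2.le
  have hK : 0 < K :=
    pos_of_mul_pos_left ((pow_pos (hfpos y hy) 2).trans_le (hfa y hy)) (sub_pos.2 hy.1).le
  have hlim : Tendsto (fun x => u x / f x) (𝓝[>] a) atBot := by
    refine tendsto_atBot_of_div_sub_le_deriv hy.1 (div_pos hWy hK)
      (fun x hx => hf.hasDerivAt_div hu (hsub hx) (hfpos x (hsub hx)).ne') fun x hx => ?_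
    have hWx := hf.antitoneOn_wronskian hu hEF hfpos hupos (hsub hx) hy hx.2.le
    rw [div_div]
    exact div_le_div₀ (hWy.le.trans hWx) hWx (pow_pos (hfpos x (hsub hx)) 2) (hfa x (hsub hx))
  obtain ⟨x, hneg, hx⟩ := ((hlim.eventually_lt_atBot 0).and (Ioo_mem_nhdsGT hy.1)).exists
  exact hneg.not_gt (div_pos (hupos x (hsub hx)) (hfpos x (hsub hx)))

theorem wronskian_nonneg (hf : IsSchrodingerSol V E (Ioo a b) f f')
    (hu : IsSchrodingerSol V F (Ioo a b) u u') (hEF : E ≤ F) (hfpos : ∀ x ∈ Ioo a b, 0 < f x)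
    (hupos : ∀ x ∈ Ioo a b, 0 < u x) (hfb : ∀ x ∈ Ioo a b, f x ^ 2 ≤ K * (b - x)) :
    ∀ x ∈ Ioo a b, 0 ≤ wronskian f f' u u' x := by
  intro x hx
  have hneg : MapsTo Neg.neg (Ioo (-b) (-a)) (Ioo a b) :=
    fun y hy => ⟨lt_neg.1 hy.2, neg_lt.1 hy.1⟩
  have h := (hf.comp_neg hneg).wronskian_nonpos (K := K) (hu.comp_neg hneg) hEF
    (fun y hy => hfpos _ (hneg hy)) (fun y hy => hupos _ (hneg hy))
    (fun y hy => (hfb _ (hneg hy)).trans_eq (by ring)) (-x) ⟨neg_lt_neg hx.2, neg_lt_neg hx.1⟩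
  simp only [wronskian, neg_neg] at h ⊢
  linarith

theorem wronskian_eq_zero (hf : IsSchrodingerSol V E (Ioo a b) f f')
    (hu : IsSchrodingerSol V F (Ioo a b) u u') (hEF : E ≤ F) (hf0 : ∀ x ∈ Ioo a b, f x ≠ 0)
    (hu0 : ∀ x ∈ Ioo a b, u x ≠ 0) (hfa : ∀ x ∈ Ioo a b, f x ^ 2 ≤ K * (x - a))
    (hfb : ∀ x ∈ Ioo a b, f x ^ 2 ≤ K * (b - x)) :
    ∀ x ∈ Ioo a b, wronskian f f' u u' x = 0 := by
  intro x hx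
  obtain ⟨r, hr, hrf⟩ := exists_const_mul_pos isPreconnected_Ioo hf.continuousOn hf0
  obtain ⟨q, hq, hqu⟩ := exists_const_mul_pos isPreconnected_Ioo hu.continuousOn hu0
  have hle := (hf.const_mul r).wronskian_nonpos (hu.const_mul q) hEF hrf hqu (K := r ^ 2 * K)
    (fun y hy => by grw [mul_pow, hfa y hy, mul_assoc]) x hx
  have hge := (hf.const_mul r).wronskian_nonneg (hu.const_mul q) hEF hrf hqu (K := r ^ 2 * K)
    (fun y hy => by grw [mul_pow, hfb y hy, mul_assoc]) x hx
  have hW : r * q * wronskian f f' u u' x = 0 := by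
    simp only [wronskian] at hle hge ⊢
    linarith
  exact (mul_eq_zero.1 hW).resolve_left (mul_ne_zero hr hq)

end IsSchrodingerSol

/-- A nontrivial solution of `-f'' + V f = E f` on `(a, b)` with Dirichlet boundary values. For a
potential that is singular at `a` or `b`, the Lipschitz bound on `f²` selects the principal solution
there; it is how membership in the Friedrichs form domain enters the comparison argument. -/
structure IsDirichletEigenfunction (V : ℝ → ℝ) (E a b : ℝ) (f f' : ℝ → ℝ) : Prop
    extends IsSchrodingerSol V E (Ioo a b) f f' where
  continuousOn_Icc : ContinuousOn f (Icc a b)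
  map_left : f a = 0
  map_right : f b = 0
  exists_ne_zero : ∃ x ∈ Ioo a b, f x ≠ 0
  exists_lipschitzOnWith_sq : ∃ K, LipschitzOnWith K (fun x => f x ^ 2) (Icc a b)

namespace IsDirichletEigenfunction

variable {V : ℝ → ℝ} {E F a b c d : ℝ} {f f' u u' : ℝ → ℝ}

theorem lt (hf : IsDirichletEigenfunction V E a b f f') : a < b :=
  let ⟨_, hx, _⟩ := hf.exists_ne_zero
  hx.1.trans hx.2

theorem exists_sq_le (hf : IsDirichletEigenfunction V E a b f f') :
    ∃ K, (∀ x ∈ Ioo a b, f x ^ 2 ≤ K * (x - a)) ∧ ∀ x ∈ Ioo a b, f x ^ 2 ≤ K * (b - x) := by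
  obtain ⟨K, hK⟩ := hf.exists_lipschitzOnWith_sq
  have hle : ∀ x ∈ Ioo a b, ∀ y ∈ Icc a b, f y = 0 → f x ^ 2 ≤ K * |x - y| := fun x hx y hy hfy =>
    by simpa [Real.dist_eq, hfy] using hK.dist_le_mul x (Ioo_subset_Icc_self hx) y hy
  refine ⟨K, fun x hx => ?_, fun x hx => ?_⟩
  · simpa [abs_of_pos (sub_pos.2 hx.1)] using
      hle x hx a (left_mem_Icc.2 hf.lt.le) hf.map_left
  · simpa [abs_sub_comm x b, abs_of_pos (sub_pos.2 hx.2)] using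
      hle x hx b (right_mem_Icc.2 hf.lt.le) hf.map_right

theorem wronskian_eq_zero (hf : IsDirichletEigenfunction V E a b f f')
    (hu : IsSchrodingerSol V F (Ioo a b) u u') (hEF : E ≤ F) (hf0 : ∀ x ∈ Ioo a b, f x ≠ 0)
    (hu0 : ∀ x ∈ Ioo a b, u x ≠ 0) : ∀ x ∈ Ioo a b, wronskian f f' u u' x = 0 :=
  let ⟨_, ha, hb⟩ := hf.exists_sq_le
  hf.toIsSchrodingerSol.wronskian_eq_zero hu hEF hf0 hu0 ha hb

theorem exists_zero_Ioo_of_ne_zero (hf : IsDirichletEigenfunction V E a b f f')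
    (hu : IsSchrodingerSol V F (Ioo a b) u u') (hEF : E < F) (hf0 : ∀ x ∈ Ioo a b, f x ≠ 0) :
    ∃ x ∈ Ioo a b, u x = 0 := by
  by_contra! hu0
  obtain ⟨x, hx⟩ := exists_between hf.lt
  have hW : HasDerivAt (wronskian f f' u u') 0 x :=
    (hasDerivAt_const x 0).congr_of_eventuallyEq
      (EqOn.eventuallyEq_of_mem (hf.wronskian_eq_zero hu hEF.le hf0 hu0) (isOpen_Ioo.mem_nhds hx))
  exact mul_ne_zero (sub_ne_zero.2 hEF.ne) (mul_ne_zero (hf0 x hx) (hu0 x hx))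
    ((hf.hasDerivAt_wronskian hu hx).unique hW)

/-- If `u` had no zero, then `u / f` would be constant, hence `u b = 0` by continuity. -/
theorem exists_zero_Ioc_of_ne_zero (hf : IsDirichletEigenfunction V E a b f f')
    (hu : IsSchrodingerSol V F (Ioo a b) u u') (hucont : ContinuousOn u (Ioc a b)) (hEF : E ≤ F)
    (hf0 : ∀ x ∈ Ioo a b, f x ≠ 0) : ∃ x ∈ Ioc a b, u x = 0 := by
  by_contra! hu0
  have hb : b ∈ Ioc a b := right_mem_Ioc.2 hf.lt
  have hW := hf.wronskian_eq_zero hu hEF hf0 fun x hx => hu0 x (Ioo_subset_Ioc_self hx)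
  have hderiv : ∀ x ∈ Ioo a b, HasDerivAt (fun x => u x / f x) 0 x := fun x hx => by
    simpa [hW x hx] using hf.hasDerivAt_div hu hx (hf0 x hx)
  obtain ⟨r, hr⟩ := isOpen_Ioo.exists_is_const_of_deriv_eq_zero isPreconnected_Ioo
    (fun x hx => (hderiv x hx).differentiableAt.differentiableWithinAt)
    (fun x hx => (hderiv x hx).deriv)
  have heq : EqOn u (fun x => r * f x) (Ioc a b) :=
    EqOn.of_subset_closure (fun x hx => (div_eq_iff (hf0 x hx)).1 (hr x hx)) hucont
      (continuousOn_const.mul (hf.continuousOn_Icc.mono Ioc_subset_Icc_self)) Ioo_subset_Ioc_self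
      (closure_Ioo hf.lt.ne ▸ Ioc_subset_Icc_self)
  exact hu0 b hb (by simpa [hf.map_right] using heq hb)

theorem exists_nodal_interval (hf : IsDirichletEigenfunction V E a b f f')
    (hV : ContinuousOn V (Ioo a b)) (hac : a ≤ c) (hcd : c < d) (hdb : d ≤ b) (hfc : f c = 0)
    (hfd : f d = 0) : ∃ p q, c ≤ p ∧ q ≤ d ∧ IsDirichletEigenfunction V E p q f f' ∧
      ∀ x ∈ Ioo p q, f x ≠ 0 := by
  obtain ⟨x, hx, hfx⟩ := hf.exists_ne_zero_of_subinterval hV hf.exists_ne_zero hcd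
    (Ioo_subset_Ioo hac hdb)
  obtain ⟨p, q, hcp, hqd, hxpq, hfp, hfq, hpq⟩ := exists_consecutive_zeros
    (hf.continuousOn_Icc.mono (Icc_subset_Icc hac hdb)) hfc hfd hx hfx
  have hsub : Icc p q ⊆ Icc a b := Icc_subset_Icc (hac.trans hcp) (hqd.trans hdb)
  exact ⟨p, q, hcp, hqd,
    { toIsSchrodingerSol :=
        hf.toIsSchrodingerSol.mono (Ioo_subset_Ioo (hac.trans hcp) (hqd.trans hdb))
      continuousOn_Icc := hf.continuousOn_Icc.mono hsub
      map_left := hfp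
      map_right := hfq
      exists_ne_zero := ⟨x, hxpq, hfx⟩
      exists_lipschitzOnWith_sq := hf.exists_lipschitzOnWith_sq.imp fun _ hK => hK.mono hsub }, hpq⟩

theorem exists_zero_Ioo (hf : IsDirichletEigenfunction V E a b f f')
    (hV : ContinuousOn V (Ioo a b)) (hu : IsSchrodingerSol V F (Ioo a b) u u') (hEF : E < F)
    (hac : a ≤ c) (hcd : c < d) (hdb : d ≤ b) (hfc : f c = 0) (hfd : f d = 0) :
    ∃ x ∈ Ioo c d, u x = 0 := by
  obtain ⟨p, q, hcp, hqd, hfpq, hpq⟩ := hf.exists_nodal_interval hV hac hcd hdb hfc hfd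
  obtain ⟨x, hx, hux⟩ := hfpq.exists_zero_Ioo_of_ne_zero
    (hu.mono (Ioo_subset_Ioo (hac.trans hcp) (hqd.trans hdb))) hEF hpq
  exact ⟨x, Ioo_subset_Ioo hcp hqd hx, hux⟩

theorem exists_zero_Ioc (hf : IsDirichletEigenfunction V E a b f f')
    (hV : ContinuousOn V (Ioo a b)) (hu : IsSchrodingerSol V F (Ioo a b) u u')
    (hucont : ContinuousOn u (Ioc a b)) (hEF : E ≤ F) (hac : a ≤ c) (hcd : c < d) (hdb : d ≤ b)
    (hfc : f c = 0) (hfd : f d = 0) : ∃ x ∈ Ioc c d, u x = 0 := by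
  obtain ⟨p, q, hcp, hqd, hfpq, hpq⟩ := hf.exists_nodal_interval hV hac hcd hdb hfc hfd
  obtain ⟨x, hx, hux⟩ := hfpq.exists_zero_Ioc_of_ne_zero
    (hu.mono (Ioo_subset_Ioo (hac.trans hcp) (hqd.trans hdb)))
    (hucont.mono (Ioc_subset_Ioc (hac.trans hcp) (hqd.trans hdb))) hEF hpq
  exact ⟨x, Ioc_subset_Ioc hcp hqd hx, hux⟩

/-! ### Counting zeros -/

theorem encard_zeros_le_encard_zeros_Ioc_add_one (hf : IsDirichletEigenfunction V E a b f f')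
    (hV : ContinuousOn V (Ioo a b)) (hu : IsSchrodingerSol V F (Ioo a b) u u')
    (hucont : ContinuousOn u (Ioc a b)) (hEF : E ≤ F) :
    {x ∈ Icc a b | f x = 0}.encard ≤ {x ∈ Ioc a b | u x = 0}.encard + 1 := by
  refine encard_le_encard_add_one_of_interleaved fun c hc d hd hcd => ?_
  obtain ⟨x, hx, hux⟩ := hf.exists_zero_Ioc hV hu hucont hEF hc.1.1 hcd hd.1.2 hc.2 hd.2
  exact ⟨x, ⟨Ioc_subset_Ioc hc.1.1 hd.1.2 hx, hux⟩, hx⟩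

theorem encard_zeros_le_encard_zeros_Ioo_add_one (hf : IsDirichletEigenfunction V E a b f f')
    (hV : ContinuousOn V (Ioo a b)) (hu : IsSchrodingerSol V F (Ioo a b) u u') (hEF : E < F) :
    {x ∈ Icc a b | f x = 0}.encard ≤ {x ∈ Ioo a b | u x = 0}.encard + 1 := by
  refine encard_le_encard_add_one_of_interleaved fun c hc d hd hcd => ?_
  obtain ⟨x, hx, hux⟩ := hf.exists_zero_Ioo hV hu hEF hc.1.1 hcd hd.1.2 hc.2 hd.2
  exact ⟨x, ⟨Ioo_subset_Ioo hc.1.1 hd.1.2 hx, hux⟩, Ioo_subset_Ioc_self hx⟩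

theorem encard_zeros_Ioo_add_two_le (hf : IsDirichletEigenfunction V E a b f f') :
    {x ∈ Ioo a b | f x = 0}.encard + 2 ≤ {x ∈ Icc a b | f x = 0}.encard := by
  have hdisj : Disjoint {x ∈ Ioo a b | f x = 0} {a, b} :=
    disjoint_left.2 fun x hx => by simp [hx.1.1.ne', hx.1.2.ne]
  rw [← encard_pair hf.lt.ne, ← encard_union_eq hdisj]
  refine encard_le_encard (union_subset (fun x hx => ⟨Ioo_subset_Icc_self hx.1, hx.2⟩) ?_)
  rintro x (rfl | rfl)
  · exact ⟨left_mem_Icc.2 hf.lt.le, hf.map_left⟩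
  · exact ⟨right_mem_Icc.2 hf.lt.le, hf.map_right⟩

theorem encard_zeros_add_one_le (hf : IsDirichletEigenfunction V E a b f f')
    (hV : ContinuousOn V (Ioo a b)) (hu : IsDirichletEigenfunction V F a b u u') (hEF : E < F) :
    {x ∈ Icc a b | f x = 0}.encard + 1 ≤ {x ∈ Icc a b | u x = 0}.encard :=
  calc {x ∈ Icc a b | f x = 0}.encard + 1
    _ ≤ {x ∈ Ioo a b | u x = 0}.encard + 1 + 1 := by
      gcongr
      exact hf.encard_zeros_le_encard_zeros_Ioo_add_one hV hu.toIsSchrodingerSol hEF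
    _ = {x ∈ Ioo a b | u x = 0}.encard + 2 := by rw [add_assoc, one_add_one_eq_two]
    _ ≤ {x ∈ Icc a b | u x = 0}.encard := hu.encard_zeros_Ioo_add_two_le

theorem add_two_le_encard_zeros (hV : ContinuousOn V (Ioo a b)) {k : ℕ} {lam : ℕ → ℝ}
    (hmono : StrictMonoOn lam (Iic k))
    (hlam : ∀ j < k, ∃ g g', IsDirichletEigenfunction V (lam j) a b g g')
    (hf : IsDirichletEigenfunction V (lam k) a b f f') :
    k + 2 ≤ {x ∈ Icc a b | f x = 0}.encard := by
  induction k generalizing f f' with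
  | zero => exact le_trans (by simp) hf.encard_zeros_Ioo_add_two_le
  | succ k ih =>
    obtain ⟨g, g', hg⟩ := hlam k k.lt_succ_self
    have hgzeros := ih (hmono.mono (Iic_subset_Iic.2 k.le_succ))
      (fun j hj => hlam j (hj.trans k.lt_succ_self)) hg
    calc ((k + 1 : ℕ) : ℕ∞) + 2 = k + 2 + 1 := by push_cast; ring
      _ ≤ {x ∈ Icc a b | g x = 0}.encard + 1 := by gcongr
      _ ≤ _ := hg.encard_zeros_add_one_le hV hf
        (hmono (mem_Iic.2 k.le_succ) (mem_Iic.2 le_rfl) k.lt_succ_self)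

end IsDirichletEigenfunction

namespace IsSchrodingerSol

variable {V : ℝ → ℝ} {E a b : ℝ} {f f' : ℝ → ℝ}

theorem hasDerivAt_mul_deriv {s : Set ℝ} (hf : IsSchrodingerSol V E s f f') {x : ℝ} (hx : x ∈ s) :
    HasDerivAt (fun x => f x * f' x) (f' x ^ 2 + V x * f x ^ 2 - E * f x ^ 2) x :=
  ((hf.hasDerivAt x hx).mul (hf.hasDerivAt_deriv x hx)).congr_deriv (by ring)

/-- Finite energy makes `(f f')' = f'² + V f² - E f²` integrable, so `(f²)' = 2 f f'` is bounded. -/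
theorem exists_lipschitzOnWith_sq (hf : IsSchrodingerSol V E (Ioo a b) f f')
    (hcont : ContinuousOn f (Icc a b))
    (hint : IntegrableOn (fun x => f' x ^ 2 + V x * f x ^ 2) (Ioo a b)) :
    ∃ K, LipschitzOnWith K (fun x => f x ^ 2) (Icc a b) := by
  rcases eq_or_ne a b with rfl | hab
  · exact ⟨0, by simp⟩
  have hsq : IntegrableOn (fun x => E * f x ^ 2) (Ioo a b) :=
    ((continuousOn_const.mul (hcont.pow 2)).integrableOn_compact isCompact_Icc).mono_set
      Ioo_subset_Icc_self
  obtain ⟨K, hK⟩ :=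
    exists_norm_le_of_integrableOn_deriv (fun _ hx => hf.hasDerivAt_mul_deriv hx) (hint.sub hsq)
  have hlip : LipschitzOnWith (2 * K.toNNReal) (fun x => f x ^ 2) (Ioo a b) := by
    refine (convex_Ioo a b).lipschitzOnWith_of_nnnorm_hasDerivWithin_le
      (f' := fun x => 2 * (f x * f' x)) (fun x hx => ?_) fun x hx => ?_
    · exact ((hf.hasDerivAt x hx).pow 2).hasDerivWithinAt.congr_deriv (by ring)
    · rw [nnnorm_mul, Real.nnnorm_two, ← Real.toNNReal_coe (r := ‖f x * f' x‖₊), coe_nnnorm]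
      gcongr
      exact hK x hx
  exact ⟨_, closure_Ioo hab ▸ hlip.closure (closure_Ioo hab ▸ hcont.pow 2)⟩

theorem isDirichletEigenfunction_extendFrom (hf : IsSchrodingerSol V E (Ioo a b) f f')
    (hne : ∃ x ∈ Ioo a b, f x ≠ 0) (ha : Tendsto f (𝓝[>] a) (𝓝 0))
    (hb : Tendsto f (𝓝[<] b) (𝓝 0))
    (hint : IntegrableOn (fun x => f' x ^ 2 + V x * f x ^ 2) (Ioo a b)) :
    IsDirichletEigenfunction V E a b (extendFrom (Ioo a b) f) f' := by
  obtain ⟨p, hp, hfp⟩ := hne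
  have hab : a < b := hp.1.trans hp.2
  have heq : EqOn (extendFrom (Ioo a b) f) f (Ioo a b) :=
    fun x hx => extendFrom_eq (subset_closure hx) (hf.continuousOn x hx)
  have hsol := hf.congr isOpen_Ioo heq
  have hcont := continuousOn_Icc_extendFrom_Ioo hf.continuousOn ha hb
  exact
    { toIsSchrodingerSol := hsol
      continuousOn_Icc := hcont
      map_left := eq_lim_at_left_extendFrom_Ioo hab ha
      map_right := eq_lim_at_right_extendFrom_Ioo hab hb
      exists_ne_zero := ⟨p, hp, heq hp ▸ hfp⟩
      exists_lipschitzOnWith_sq := hsol.exists_lipschitzOnWith_sq hcont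
        (hint.congr_fun (fun x hx => by simp only [heq hx]) measurableSet_Ioo) }

end IsSchrodingerSol

/-! ### Laguerre polynomials and the half-line oscillator -/

section Laguerre

open Polynomial

variable {K : Type*} [Field K] {α : K} {n : ℕ}

/-- The generalised Laguerre polynomial of degree `n` and parameter `α`, normalised to take the
value `1` at `0`, i.e. Kummer's function `₁F₁(-n; α + 1; x)`. -/
noncomputable def laguerre (α : K) (n : ℕ) : K[X] :=
  ∑ j ∈ Finset.range (n + 1),
    monomial j (∏ i ∈ Finset.range j, ((i : K) - n) / ((i + 1) * (i + 1 + α)))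

theorem coeff_laguerre (j : ℕ) :
    (laguerre α n).coeff j = ∏ i ∈ Finset.range j, ((i : K) - n) / ((i + 1) * (i + 1 + α)) := by
  simp only [laguerre, finsetSum_coeff, coeff_monomial, Finset.sum_ite_eq', Finset.mem_range]
  split_ifs with hj
  · rfl
  · exact (Finset.prod_eq_zero (Finset.mem_range.2 (by omega : n < j)) (by simp)).symm

theorem natDegree_laguerre_le : (laguerre α n).natDegree ≤ n :=
  natDegree_sum_le_of_forall_le _ _ fun _ hj =>
    (natDegree_monomial_le _).trans (Finset.mem_range_succ_iff.1 hj)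

theorem eval_zero_laguerre : (laguerre α n).eval 0 = 1 := by
  rw [← coeff_zero_eq_eval_zero, coeff_laguerre, Finset.prod_range_zero]

theorem laguerre_ne_zero : laguerre α n ≠ 0 := fun h =>
  zero_ne_one (α := K) <| by rw [← eval_zero_laguerre (α := α) (n := n), h, eval_zero]

theorem coeff_succ_laguerre [CharZero K] {j : ℕ} (hα : (j : K) + 1 + α ≠ 0) :
    (j + 1) * (j + 1 + α) * (laguerre α n).coeff (j + 1) = (j - n) * (laguerre α n).coeff j := by
  have hj : (j : K) + 1 ≠ 0 := j.cast_add_one_ne_zero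
  rw [coeff_laguerre, coeff_laguerre, Finset.prod_range_succ]
  field_simp

theorem laguerre_ode [CharZero K] (hα : ∀ j : ℕ, (j : K) + 1 + α ≠ 0) :
    X * derivative (derivative (laguerre α n)) + (C (α + 1) - X) * derivative (laguerre α n) +
      C (n : K) * laguerre α n = 0 := by
  ext j
  have hrec := coeff_succ_laguerre (n := n) (hα j)
  cases j with
  | zero =>
    simp [sub_mul, coeff_derivative] at hrec ⊢
    linear_combination hrec
  | succ j =>
    simp only [sub_mul, coeff_add, coeff_sub, coeff_X_mul, coeff_C_mul, coeff_derivative,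
      coeff_zero]
    push_cast at hrec ⊢
    linear_combination hrec

end Laguerre

/-- The potential `ξ² x² + (ν² - 1/4) / x²` of the operator `G_ξ`. -/
noncomputable def oscillatorPotential (ν ξ x : ℝ) : ℝ := ξ ^ 2 * x ^ 2 + (ν ^ 2 - 1 / 4) / x ^ 2

theorem oscillatorPotential_abs_abs (ν ξ : ℝ) :
    oscillatorPotential |ν| |ξ| = oscillatorPotential ν ξ := by
  funext x
  simp only [oscillatorPotential, sq_abs]

theorem continuousOn_oscillatorPotential (ν ξ : ℝ) :
    ContinuousOn (oscillatorPotential ν ξ) {0}ᶜ :=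
  (by fun_prop : Continuous fun x : ℝ => ξ ^ 2 * x ^ 2).continuousOn.add
    (continuousOn_const.div (by fun_prop) fun _ hx => pow_ne_zero 2 hx)

theorem IsEigenvalueGxi.exists_isDirichletEigenfunction {ν ξ E : ℝ} (h : IsEigenvalueGxi ν ξ E) :
    ∃ f f', IsDirichletEigenfunction (oscillatorPotential ν ξ) E 0 1 f f' := by
  obtain ⟨f, hne, hd, hd', hode, h0, h1, hint⟩ := h
  have hsol : IsSchrodingerSol (oscillatorPotential ν ξ) E (Ioo 0 1) f (deriv f) :=
    ⟨fun x hx => (hd x hx).hasDerivAt, fun x hx => (hd' x hx).hasDerivAt.congr_deriv <| by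
      rw [oscillatorPotential]
      linear_combination -hode x hx⟩
  rw [nhdsWithin_Ioo_eq_nhdsGT one_pos] at h0
  rw [nhdsWithin_Ioo_eq_nhdsLT one_pos] at h1
  exact ⟨_, _, hsol.isDirichletEigenfunction_extendFrom hne h0 h1 hint⟩

/-- The positive factor `x ^ (ν + 1/2) exp(-ξ x² / 2)` of the half-line oscillator functions, i.e.
their behaviour at `0` and, for `ξ > 0`, their decay at infinity. -/
noncomputable def oscillatorAmplitude (ν ξ x : ℝ) : ℝ :=
  x ^ (ν + 1 / 2) * Real.exp (-(ξ * x ^ 2 / 2))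

/-- The half-line oscillator function, with which the eigenfunctions of `G_ξ` are compared: it
solves `-u'' + (ξ² x² + (ν² - 1/4) / x²) u = ξ (4 n + 2 (1 + ν)) u` on `(0, ∞)`. -/
noncomputable def oscillatorSol (ν ξ : ℝ) (n : ℕ) (x : ℝ) : ℝ :=
  oscillatorAmplitude ν ξ x * (laguerre ν n).eval (ξ * x ^ 2)

theorem oscillatorAmplitude_pos (ν ξ : ℝ) {x : ℝ} (hx : 0 < x) : 0 < oscillatorAmplitude ν ξ x :=
  mul_pos (Real.rpow_pos_of_pos hx _) (Real.exp_pos _)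

theorem hasDerivAt_oscillatorAmplitude (ν ξ : ℝ) {x : ℝ} (hx : x ≠ 0) :
    HasDerivAt (oscillatorAmplitude ν ξ)
      (((ν + 1 / 2) / x - ξ * x) * oscillatorAmplitude ν ξ x) x := by
  have hexponent : HasDerivAt (fun x : ℝ => -(ξ * x ^ 2 / 2)) (-(ξ * x)) x :=
    (((hasDerivAt_pow 2 x).const_mul ξ).div_const 2).neg.congr_deriv (by push_cast; ring)
  refine ((Real.hasDerivAt_rpow_const (Or.inl hx)).mul hexponent.exp).congr_deriv ?_
  rw [Real.rpow_sub_one hx, oscillatorAmplitude]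
  ring

theorem hasDerivAt_eval_mul_sq (P : Polynomial ℝ) (ξ x : ℝ) :
    HasDerivAt (fun x => P.eval (ξ * x ^ 2)) (2 * ξ * x * P.derivative.eval (ξ * x ^ 2)) x := by
  have hsq : HasDerivAt (fun x => ξ * x ^ 2) (2 * ξ * x) x :=
    ((hasDerivAt_pow 2 x).const_mul ξ).congr_deriv (by push_cast; ring)
  exact ((P.hasDerivAt (ξ * x ^ 2)).comp x hsq).congr_deriv (mul_comm _ _)

theorem exists_isSchrodingerSol_oscillatorSol {ν : ℝ} (hν : ∀ j : ℕ, (j : ℝ) + 1 + ν ≠ 0) (ξ : ℝ)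
    (n : ℕ) :
    ∃ u', IsSchrodingerSol (oscillatorPotential ν ξ) (ξ * (4 * n + 2 * (1 + ν))) (Ioi 0)
      (oscillatorSol ν ξ n) u' := by
  set A := oscillatorAmplitude ν ξ with hA
  set P := laguerre ν n with hP
  refine ⟨fun x => A x * (((ν + 1 / 2) / x - ξ * x) * P.eval (ξ * x ^ 2) +
    2 * ξ * x * P.derivative.eval (ξ * x ^ 2)), fun x hx => ?_, fun x hx => ?_⟩
  · exact ((hasDerivAt_oscillatorAmplitude ν ξ (ne_of_gt hx)).mul
      (hasDerivAt_eval_mul_sq P ξ x)).congr_deriv (by ring)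
  have hx0 : x ≠ 0 := ne_of_gt hx
  have hlog : HasDerivAt (fun x : ℝ => (ν + 1 / 2) / x - ξ * x) (-(ν + 1 / 2) / x ^ 2 - ξ) x :=
    (((hasDerivAt_const x (ν + 1 / 2)).div (hasDerivAt_id x) hx0).sub
      ((hasDerivAt_id x).const_mul ξ)).congr_deriv (by simp)
  have hlin : HasDerivAt (fun x : ℝ => 2 * ξ * x) (2 * ξ) x := hasDerivAt_const_mul _
  have hode := congrArg (Polynomial.eval (ξ * x ^ 2)) (laguerre_ode (n := n) hν)
  simp only [Polynomial.eval_add, Polynomial.eval_mul, Polynomial.eval_sub, Polynomial.eval_X,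
    Polynomial.eval_C, Polynomial.eval_zero, ← hP] at hode
  refine ((hasDerivAt_oscillatorAmplitude ν ξ hx0).mul
    ((hlog.mul (hasDerivAt_eval_mul_sq P ξ x)).add
      (hlin.mul (hasDerivAt_eval_mul_sq P.derivative ξ x)))).congr_deriv ?_
  simp only [Pi.add_apply, Pi.mul_apply, oscillatorPotential, oscillatorSol, ← hA, ← hP]
  generalize P.derivative.derivative.eval (ξ * x ^ 2) = p'' at hode ⊢
  generalize P.derivative.eval (ξ * x ^ 2) = p' at hode ⊢
  generalize P.eval (ξ * x ^ 2) = p at hode ⊢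
  field_simp
  linear_combination 64 * x ^ 2 * A x * ξ * hode

theorem encard_zeros_oscillatorSol_le (ν ξ : ℝ) (n : ℕ) :
    {x ∈ Ioi 0 | oscillatorSol ν ξ n x = 0}.encard ≤ n := by
  have hroot : ∀ x ∈ {x ∈ Ioi 0 | oscillatorSol ν ξ n x = 0},
      (laguerre ν n).eval (ξ * x ^ 2) = 0 := fun x hx =>
    (mul_eq_zero.1 hx.2).resolve_left (oscillatorAmplitude_pos ν ξ hx.1).ne'
  have hinj : InjOn (fun x => ξ * x ^ 2) {x ∈ Ioi 0 | oscillatorSol ν ξ n x = 0} := by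
    intro x hx y hy hxy
    have hξ : ξ ≠ 0 := by
      rintro rfl
      simpa [eval_zero_laguerre] using hroot x hx
    exact (sq_eq_sq₀ (le_of_lt hx.1) (le_of_lt hy.1)).1 (mul_left_cancel₀ hξ hxy)
  calc {x ∈ Ioi 0 | oscillatorSol ν ξ n x = 0}.encard
    _ ≤ ((laguerre ν n).roots.toFinset : Set ℝ).encard :=
      encard_le_encard_of_injOn (fun x hx => by simp [laguerre_ne_zero, hroot x hx]) hinj
    _ ≤ n := by
      rw [encard_coe_eq_coe_finsetCard, Nat.cast_le]
      exact (Multiset.toFinset_card_le _).trans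
        ((Polynomial.card_roots' _).trans natDegree_laguerre_le)

theorem eigenvalue_lower_bound_general {ν ξ : ℝ} {k : ℕ} {lam : ℕ → ℝ}
    (hmono : StrictMonoOn lam (Iic k)) (heig : ∀ j ≤ k, IsEigenvalueGxi ν ξ (lam j)) :
    |ξ| * (4 * k + 2 * (1 + |ν|)) < lam k := by
  by_contra! hle
  have hV : ContinuousOn (oscillatorPotential ν ξ) (Ioo 0 1) :=
    (continuousOn_oscillatorPotential ν ξ).mono fun x hx => hx.1.ne'
  obtain ⟨f, f', hf⟩ := (heig k le_rfl).exists_isDirichletEigenfunction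
  obtain ⟨u', hu⟩ :=
    exists_isSchrodingerSol_oscillatorSol (ν := |ν|) (fun j => by positivity) |ξ| k
  rw [oscillatorPotential_abs_abs] at hu
  have hlower : (k + 2 : ℕ∞) ≤ {x ∈ Icc 0 1 | f x = 0}.encard :=
    hf.add_two_le_encard_zeros hV hmono
      (fun j hj => (heig j hj.le).exists_isDirichletEigenfunction)
  have hupper : {x ∈ Icc 0 1 | f x = 0}.encard ≤ k + 1 :=
    calc {x ∈ Icc 0 1 | f x = 0}.encard
      _ ≤ {x ∈ Ioc 0 1 | oscillatorSol |ν| |ξ| k x = 0}.encard + 1 :=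
        hf.encard_zeros_le_encard_zeros_Ioc_add_one hV (hu.mono fun x hx => hx.1)
          (hu.continuousOn.mono fun x hx => hx.1) hle
      _ ≤ k + 1 := by
        gcongr
        have hsub : {x ∈ Ioc 0 1 | oscillatorSol |ν| |ξ| k x = 0} ⊆
            {x ∈ Ioi 0 | oscillatorSol |ν| |ξ| k x = 0} := fun x hx => ⟨hx.1.1, hx.2⟩
        exact (encard_le_encard hsub).trans (encard_zeros_oscillatorSol_le |ν| |ξ| k)
  have : k + 2 ≤ k + 1 := by exact_mod_cast hlower.trans hupper
  omega

/-- Lower bound for the eigenvalues of `G_ξ`: if `(λ k)` is the increasing enumeration of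
the eigenvalues of `G_ξ`, then `λ k / ξ > 4k + 2(1+ν)` for every `k`. -/
theorem eigenvalue_lower_bound (ν ξ : ℝ) (hν : 0 ≤ ν) (hξ : 0 < ξ)
    (lam : ℕ → ℝ) (hmono : StrictMono lam)
    (heig : ∀ k, IsEigenvalueGxi ν ξ (lam k))
    (hall : ∀ E : ℝ, IsEigenvalueGxi ν ξ E → ∃ k, lam k = E) :
    ∀ k : ℕ, lam k / ξ > 4 * k + 2 * (1 + ν) := fun k => by
  simpa only [gt_iff_lt, lt_div_iff₀' hξ, abs_of_pos hξ, abs_of_nonneg hν] using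
    eigenvalue_lower_bound_general (hmono.strictMonoOn (Iic k)) fun j _ => heig j
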